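/- (Centralized model.) Let n ≥ 2, ε ∈ (0,1], and let q be an integer with q ≥ 300·√n/ε². Then the collision-based tester (K_q, 1/2), where K_q is the complete graph on q vertices (so all pairs among q i.i.d. samples are compared), is an (n,ε)-uniformity tester; in particular Θ(√n/ε²) samples suffice to test uniformity in the centralized model. -/

import Mathlib

open Finset

open Classical in
/-- Probability of the event `A` under the product distribution on `Ω = V → Fin n`,
where the coordinates are independent and each has law the probability vector `P`. -/
noncomputable def pr {V : Type*} [Fintype V] [DecidableEq V] {n : ℕ}
    (P : Fin n → ℝ) (A : (V → Fin n) → Prop) : ℝ :=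
  ∑ ω : V → Fin n, if A ω then ∏ v, P (ω v) else 0

/-- Expectation of `f` under the product distribution. -/
noncomputable def ex {V : Type*} [Fintype V] [DecidableEq V] {n : ℕ}
    (P : Fin n → ℝ) (f : (V → Fin n) → ℝ) : ℝ :=
  ∑ ω : V → Fin n, (∏ v, P (ω v)) * f ω

/-- Variance of `f` under the product distribution. -/
noncomputable def var {V : Type*} [Fintype V] [DecidableEq V] {n : ℕ}
    (P : Fin n → ℝ) (f : (V → Fin n) → ℝ) : ℝ :=
  ex P (fun ω => (f ω - ex P f) ^ 2)

/-- The collision count `Z(ω) = ∑_{{u,v} ∈ E} 1[ω u = ω v]`. -/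
noncomputable def collisions {V : Type*} [Fintype V] [DecidableEq V] {n : ℕ}
    (G : SimpleGraph V) [DecidableRel G.Adj] (ω : V → Fin n) : ℝ :=
  ∑ e ∈ G.edgeFinset,
    Sym2.lift ⟨fun u v => if ω u = ω v then (1 : ℝ) else 0,
      fun u v => by by_cases h : ω u = ω v <;> simp [h, eq_comm]⟩ e

/-- The number of edges `|E|` of the comparison graph. -/
def edgeCount {V : Type*} [Fintype V] [DecidableEq V]
    (G : SimpleGraph V) [DecidableRel G.Adj] : ℕ :=
  G.edgeFinset.card

/-- The number of ordered 2-paths `c(G) = ∑_v d(v)·(d(v) − 1)`. -/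
def twoPaths {V : Type*} [Fintype V]
    (G : SimpleGraph V) [DecidableRel G.Adj] : ℕ :=
  ∑ v, G.degree v * (G.degree v - 1)

/-- The collision-based tester `(G, τ)` is an `(n, ε)`-uniformity tester: with threshold
`T = |E|·(1+τε²)/n`, on the uniform vector the collision count satisfies `Z < T` with
probability at least `3/4`, and on every probability vector that is ε-far from uniform
(in ℓ₁) the collision count satisfies `Z ≥ T` with probability at least `3/4`. -/
def IsUniformityTester {V : Type*} [Fintype V] [DecidableEq V]
    (n : ℕ) (ε τ : ℝ) (G : SimpleGraph V) [DecidableRel G.Adj] : Prop :=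
  (3 / 4 ≤ pr (fun _ : Fin n => (1 : ℝ) / n)
      (fun ω : V → Fin n =>
        collisions G ω < (edgeCount G : ℝ) * (1 + τ * ε ^ 2) / n)) ∧
  (∀ P : Fin n → ℝ, (∀ i, 0 ≤ P i) → (∑ i, P i) = 1 →
    ε ≤ (∑ i, |P i - 1 / (n : ℝ)|) →
    3 / 4 ≤ pr P (fun ω : V → Fin n =>
      (edgeCount G : ℝ) * (1 + τ * ε ^ 2) / n ≤ collisions G ω))

/-- Resampling one coordinate does not change the expectation. -/
lemma ex_resample {V : Type*} [Fintype V] [DecidableEq V] {n : ℕ} {P : Fin n → ℝ}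
    (hP : ∑ i, P i = 1) (v : V) (F : (V → Fin n) → ℝ) :
    ex P F = ex P (fun ω => ∑ i, P i * F (Function.update ω v i)) := by
  have hswap : ∑ x : (V → Fin n) × Fin n, (∏ u, P (x.1 u)) * P x.2 * F x.1
      = ∑ x : (V → Fin n) × Fin n,
          (∏ u, P (x.1 u)) * P x.2 * F (Function.update x.1 v x.2) := by
    refine Fintype.sum_equiv
      (Function.Involutive.toPerm
        (fun x : (V → Fin n) × Fin n => (Function.update x.1 v x.2, x.1 v)) ?_) _ _ ?_
    · rintro ⟨ω, i⟩
      simp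
    · rintro ⟨ω, i⟩
      have hrest : ∏ u ∈ univ.erase v, P (Function.update ω v i u)
          = ∏ u ∈ univ.erase v, P (ω u) :=
        prod_congr rfl fun u hu => by rw [Function.update_of_ne (ne_of_mem_erase hu)]
      have hw : (∏ u, P (Function.update ω v i u)) * P (ω v) = (∏ u, P (ω u)) * P i := by
        rw [← mul_prod_erase univ _ (mem_univ v), ← mul_prod_erase univ (fun u => P (ω u))
          (mem_univ v), hrest, Function.update_self]
        ring
      change _ = (∏ u, P (Function.update ω v i u)) * P (ω v)
        * F (Function.update (Function.update ω v i) v (ω v))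
      rw [hw, Function.update_idem, Function.update_eq_self]
  rw [Fintype.sum_prod_type, Fintype.sum_prod_type] at hswap
  calc ex P F = ∑ ω : V → Fin n, ∑ i, (∏ u, P (ω u)) * P i * F ω := by
        refine sum_congr rfl fun ω _ => ?_
        rw [← sum_mul, ← mul_sum, hP, mul_one]
    _ = _ := hswap
    _ = _ := by simp only [ex, mul_sum, mul_assoc]

lemma ex_eq_zero_of_resample {V : Type*} [Fintype V] [DecidableEq V] {n : ℕ} {P : Fin n → ℝ}
    (hP : ∑ i, P i = 1) (v : V) {F : (V → Fin n) → ℝ}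
    (hF : ∀ ω, ∑ i, P i * F (Function.update ω v i) = 0) : ex P F = 0 := by
  rw [ex_resample hP v]
  simp [ex, hF]

lemma ex_const {V : Type*} [Fintype V] [DecidableEq V] {n : ℕ} {P : Fin n → ℝ}
    (hP : ∑ i, P i = 1) (c : ℝ) : ex P (fun _ : V → Fin n => c) = c := by
  have h := prod_univ_sum (fun _ : V => (univ : Finset (Fin n))) (fun _ i => P i)
  simp only [hP, prod_const_one, Fintype.piFinset_univ] at h
  rw [ex, ← sum_mul, ← h, one_mul]

lemma ex_add {V : Type*} [Fintype V] [DecidableEq V] {n : ℕ} (P : Fin n → ℝ)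
    (f g : (V → Fin n) → ℝ) : ex P (fun ω => f ω + g ω) = ex P f + ex P g := by
  simp [ex, mul_add, sum_add_distrib]

lemma ex_const_mul {V : Type*} [Fintype V] [DecidableEq V] {n : ℕ} (P : Fin n → ℝ)
    (c : ℝ) (f : (V → Fin n) → ℝ) : ex P (fun ω => c * f ω) = c * ex P f := by
  simp only [ex, mul_sum]
  exact sum_congr rfl fun ω _ => by ring

lemma ex_sum {V ι : Type*} [Fintype V] [DecidableEq V] {n : ℕ} (P : Fin n → ℝ)
    (s : Finset ι) (f : ι → (V → Fin n) → ℝ) :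
    ex P (fun ω => ∑ a ∈ s, f a ω) = ∑ a ∈ s, ex P (f a) := by
  simp only [ex, mul_sum]
  exact sum_comm

/-- The second moment of a sum of pairwise orthogonal functions. -/
lemma ex_sum_sq_of_orthogonal {V ι : Type*} [Fintype V] [DecidableEq V] {n : ℕ}
    (P : Fin n → ℝ) (s : Finset ι) (f : ι → (V → Fin n) → ℝ)
    (horth : ∀ a ∈ s, ∀ b ∈ s, a ≠ b → ex P (fun ω => f a ω * f b ω) = 0) :
    ex P (fun ω => (∑ a ∈ s, f a ω) ^ 2) = ∑ a ∈ s, ex P (fun ω => f a ω ^ 2) := by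
  simp only [sq, sum_mul_sum, ex_sum]
  refine sum_congr rfl fun a ha => ?_
  exact sum_eq_single_of_mem a ha fun b hb hba => horth a ha b hb hba.symm

lemma ex_coord {V : Type*} [Fintype V] [DecidableEq V] {n : ℕ} {P : Fin n → ℝ}
    (hP : ∑ i, P i = 1) (v : V) (f : Fin n → ℝ) :
    ex P (fun ω => f (ω v)) = ∑ i, P i * f i := by
  rw [ex_resample hP v]
  simp [ex_const hP]

lemma ex_coord_pair {V : Type*} [Fintype V] [DecidableEq V] {n : ℕ} {P : Fin n → ℝ}
    (hP : ∑ i, P i = 1) {u v : V} (huv : u ≠ v) (f : Fin n → Fin n → ℝ) :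
    ex P (fun ω => f (ω u) (ω v)) = ∑ i, P i * ∑ j, P j * f i j := by
  rw [ex_resample hP v]
  simp only [Function.update_self, Function.update_of_ne huv]
  exact ex_coord hP u fun i => ∑ j, P j * f i j

/-- The doubly centered collision indicator of a pair of samples. -/
noncomputable def edgeKernel {V : Type*} {n : ℕ} (P : Fin n → ℝ) (ω : V → Fin n) :
    Sym2 V → ℝ :=
  Sym2.lift ⟨fun u v => (if ω u = ω v then (1 : ℝ) else 0) + ∑ i, P i ^ 2 - P (ω u) - P (ω v),
    fun u v => by simp only [eq_comm]; ring⟩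

lemma edgeKernel_update_of_notMem {V : Type*} [DecidableEq V] {n : ℕ} (P : Fin n → ℝ)
    (ω : V → Fin n) {v : V} {e : Sym2 V} (hv : v ∉ e) (i : Fin n) :
    edgeKernel P (Function.update ω v i) e = edgeKernel P ω e := by
  induction e with
  | h x y =>
    rw [Sym2.mem_iff, not_or] at hv
    simp [edgeKernel, Function.update_of_ne (Ne.symm hv.1), Function.update_of_ne (Ne.symm hv.2)]

lemma sum_edgeKernel_update {V : Type*} [DecidableEq V] {n : ℕ} {P : Fin n → ℝ}
    (hP : ∑ i, P i = 1) (ω : V → Fin n) {v : V} {e : Sym2 V} (hv : v ∈ e) (he : ¬ e.IsDiag) :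
    ∑ i, P i * edgeKernel P (Function.update ω v i) e = 0 := by
  obtain ⟨w, rfl⟩ := hv
  have hvw : w ≠ v := fun h => he (by simp [h])
  have hsq : ∑ i, P i * P i = ∑ i, P i ^ 2 := by simp only [sq]
  simp only [edgeKernel, Sym2.lift_mk, Function.update_self, Function.update_of_ne hvw, mul_sub,
    mul_add, sum_sub_distrib, sum_add_distrib, ← sum_mul, hP, hsq]
  simp

lemma ex_edgeKernel_sq {V : Type*} [Fintype V] [DecidableEq V] {n : ℕ} {P : Fin n → ℝ}
    (hP : ∑ i, P i = 1) {e : Sym2 V} (he : ¬ e.IsDiag) :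
    ex P (fun ω => edgeKernel P ω e ^ 2)
      = ∑ i, P i ^ 2 + (∑ i, P i ^ 2) ^ 2 - 2 * ∑ i, P i ^ 3 := by
  induction e with
  | h x y =>
    have hxy : x ≠ y := by simpa using he
    simp only [edgeKernel, Sym2.lift_mk]
    rw [ex_coord_pair hP hxy fun i j =>
      ((if i = j then (1 : ℝ) else 0) + ∑ i, P i ^ 2 - P i - P j) ^ 2]
    set S := ∑ i, P i ^ 2 with hS
    have hinner : ∀ i, ∑ j, P j * ((if i = j then (1 : ℝ) else 0) + S - P i - P j) ^ 2
        = P i * (1 + 2 * (S - 2 * P i)) + (S - P i) ^ 2 - 2 * (S - P i) * S + ∑ j, P j ^ 3 := by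
      intro i
      have hterm : ∀ j, P j * ((if i = j then (1 : ℝ) else 0) + S - P i - P j) ^ 2
          = (if i = j then P j * (1 + 2 * (S - P i - P j)) else 0)
            + P j * (S - P i) ^ 2 - 2 * (S - P i) * P j ^ 2 + P j ^ 3 := by
        intro j
        split_ifs <;> ring
      simp only [hterm, sum_add_distrib, sum_sub_distrib, ← sum_mul, ← mul_sum, hP, ← hS,
        sum_ite_eq, mem_univ, if_true]
      ring
    have houter : ∀ i, P i * (P i * (1 + 2 * (S - 2 * P i)) + (S - P i) ^ 2
        - 2 * (S - P i) * S + ∑ j, P j ^ 3)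
        = P i ^ 2 * (1 + 2 * S) - 3 * P i ^ 3 + P i * (∑ j, P j ^ 3 - S ^ 2) := by
      intro i
      ring
    simp only [hinner, houter, sum_add_distrib, sum_sub_distrib, ← sum_mul, ← mul_sum, hP, ← hS]
    ring

/-- Hoeffding decomposition of the centered collision count. -/
lemma collisions_sub_mean {V : Type*} [Fintype V] [DecidableEq V] {n : ℕ}
    (G : SimpleGraph V) [DecidableRel G.Adj] (P : Fin n → ℝ) (ω : V → Fin n) :
    collisions G ω - edgeCount G * ∑ i, P i ^ 2
      = ∑ v, G.degree v * (P (ω v) - ∑ i, P i ^ 2)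
        + ∑ e ∈ G.edgeFinset, edgeKernel P ω e := by
  have hdeg : ∑ v, G.degree v * (P (ω v) - ∑ i, P i ^ 2)
      = ∑ e ∈ G.edgeFinset, ∑ v, if v ∈ e then P (ω v) - ∑ i, P i ^ 2 else 0 := by
    rw [sum_comm]
    refine sum_congr rfl fun v _ => ?_
    rw [← sum_filter, sum_const, nsmul_eq_mul, ← G.incidenceFinset_eq_filter,
      G.card_incidenceFinset_eq_degree]
  rw [hdeg, ← sum_add_distrib, collisions, edgeCount, ← nsmul_eq_mul, ← sum_const,
    ← sum_sub_distrib]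
  refine sum_congr rfl fun e he => ?_
  induction e with
  | h x y =>
    have hxy : x ≠ y := (G.mem_edgeFinset.1 he : G.Adj x y).ne
    have hpair : (univ.filter fun v => v ∈ s(x, y)) = {x, y} := by ext; simp
    rw [← sum_filter, hpair, sum_pair hxy]
    simp only [edgeKernel, Sym2.lift_mk]
    ring

/-- Exact second moment of the collision count about its mean. -/
lemma ex_collisions_sub_mean_sq {V : Type*} [Fintype V] [DecidableEq V] {n : ℕ}
    (G : SimpleGraph V) [DecidableRel G.Adj] {P : Fin n → ℝ} (hP : ∑ i, P i = 1) :
    ex P (fun ω : V → Fin n => (collisions G ω - edgeCount G * ∑ i, P i ^ 2) ^ 2)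
      = (∑ v, (G.degree v : ℝ) ^ 2) * (∑ i, P i ^ 3 - (∑ i, P i ^ 2) ^ 2)
        + edgeCount G * (∑ i, P i ^ 2 + (∑ i, P i ^ 2) ^ 2 - 2 * ∑ i, P i ^ 3) := by
  set S := ∑ i, P i ^ 2 with hS
  have hmean : ∑ i, P i * (P i - S) = 0 := by
    simp only [mul_sub, ← sq, sum_sub_distrib, ← sum_mul, hP, ← hS]
    ring
  have hdiag : ∀ e ∈ G.edgeFinset, ¬ e.IsDiag := fun e he =>
    G.not_isDiag_of_mem_edgeSet (G.mem_edgeFinset.1 he)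
  have hlin : ex P (fun ω : V → Fin n => (∑ v, G.degree v * (P (ω v) - S)) ^ 2)
      = (∑ v, (G.degree v : ℝ) ^ 2) * (∑ i, P i ^ 3 - S ^ 2) := by
    rw [ex_sum_sq_of_orthogonal P univ (fun v ω => (G.degree v : ℝ) * (P (ω v) - S)), sum_mul]
    · refine sum_congr rfl fun v _ => ?_
      rw [ex_coord hP v fun i => (G.degree v * (P i - S)) ^ 2]
      have hterm : ∀ i, P i * (G.degree v * (P i - S)) ^ 2
          = (G.degree v : ℝ) ^ 2 * (P i ^ 3 - 2 * S * P i ^ 2 + P i * S ^ 2) := by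
        intro i
        ring
      simp only [hterm, ← mul_sum, sum_add_distrib, sum_sub_distrib, ← sum_mul, hP, ← hS]
      ring
    · intro a _ b _ hab
      refine ex_eq_zero_of_resample hP a fun ω => ?_
      simp only [Function.update_self, Function.update_of_ne hab.symm]
      rw [← mul_zero (G.degree a * (G.degree b * (P (ω b) - S))), ← hmean, mul_sum]
      exact sum_congr rfl fun i _ => by ring
  have hker : ex P (fun ω : V → Fin n => (∑ e ∈ G.edgeFinset, edgeKernel P ω e) ^ 2)
      = edgeCount G * (S + S ^ 2 - 2 * ∑ i, P i ^ 3) := by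
    rw [ex_sum_sq_of_orthogonal P G.edgeFinset (fun e ω => edgeKernel P ω e),
      sum_congr rfl fun e he => ex_edgeKernel_sq hP (hdiag e he), sum_const, nsmul_eq_mul,
      edgeCount]
    intro e he f hf hef
    obtain ⟨v, hve, hvf⟩ : ∃ v, v ∈ e ∧ v ∉ f := by
      by_contra! hsub
      induction e with
      | h x y =>
        have hxy : x ≠ y := by simpa using hdiag _ he
        exact hef ((Sym2.mem_and_mem_iff hxy).1 ⟨hsub x (by simp), hsub y (by simp)⟩).symm
    refine ex_eq_zero_of_resample hP v fun ω => ?_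
    simp only [edgeKernel_update_of_notMem P ω hvf, ← mul_assoc, ← sum_mul,
      sum_edgeKernel_update hP ω hve (hdiag e he), zero_mul]
  have hcross : ex P (fun ω : V → Fin n =>
      (∑ v, G.degree v * (P (ω v) - S)) * ∑ e ∈ G.edgeFinset, edgeKernel P ω e) = 0 := by
    simp only [sum_mul_sum, ex_sum]
    refine sum_eq_zero fun u _ => sum_eq_zero fun e he => ?_
    obtain ⟨v, hve, hvu⟩ : ∃ v, v ∈ e ∧ v ≠ u := by
      by_contra! hsub
      induction e with
      | h x y =>
        have hxy : x ≠ y := by simpa using hdiag _ he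
        exact hxy ((hsub x (by simp)).trans (hsub y (by simp)).symm)
    refine ex_eq_zero_of_resample hP v fun ω => ?_
    simp only [Function.update_of_ne hvu.symm, mul_left_comm (P _), ← mul_sum,
      sum_edgeKernel_update hP ω hve (hdiag e he), mul_zero]
  simp only [hS, collisions_sub_mean G P]
  simp only [← hS, add_sq, ex_add, mul_assoc, ex_const_mul, hlin, hker, hcross]
  ring

lemma sq_sum_sq_le_sum_cube {n : ℕ} {P : Fin n → ℝ} (hP0 : ∀ i, 0 ≤ P i)
    (hP : ∑ i, P i = 1) : (∑ i, P i ^ 2) ^ 2 ≤ ∑ i, P i ^ 3 := by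
  have h := sum_sq_le_sum_mul_sum_of_sq_le_mul univ (r := fun i => P i ^ 2) (f := P)
    (g := fun i => P i ^ 3) (fun i _ => hP0 i) (fun i _ => pow_nonneg (hP0 i) 3)
    (fun i _ => le_of_eq (by ring))
  rwa [hP, one_mul] at h

/-- Chebyshev's inequality at confidence level `3/4`. -/
lemma three_quarters_le_pr {V : Type*} [Fintype V] [DecidableEq V] {n : ℕ} {P : Fin n → ℝ}
    (hP0 : ∀ i, 0 ≤ P i) (hP : ∑ i, P i = 1) {A : (V → Fin n) → Prop} {D : (V → Fin n) → ℝ}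
    {t : ℝ} (ht : 0 < t) (hA : ∀ ω, ¬ A ω → t ≤ |D ω|)
    (hD : ex P (fun ω => D ω ^ 2) ≤ t ^ 2 / 4) : 3 / 4 ≤ pr P A := by
  have hpoint : ex P (fun ω => 1 + (-1 / t ^ 2) * D ω ^ 2) ≤ pr P A := by
    refine sum_le_sum fun ω _ => ?_
    have hw : 0 ≤ ∏ v, P (ω v) := prod_nonneg fun v _ => hP0 _
    split_ifs with h
    · refine mul_le_of_le_one_right hw ?_
      have : 0 ≤ D ω ^ 2 / t ^ 2 := by positivity
      linarith [show -1 / t ^ 2 * D ω ^ 2 = -(D ω ^ 2 / t ^ 2) by ring]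
    · refine mul_nonpos_of_nonneg_of_nonpos hw ?_
      have hsq : t ^ 2 ≤ D ω ^ 2 := by
        rw [← sq_abs (D ω)]
        exact pow_le_pow_left₀ ht.le (hA ω h) 2
      have : 1 ≤ D ω ^ 2 / t ^ 2 := (one_le_div (by positivity)).2 hsq
      linarith [show -1 / t ^ 2 * D ω ^ 2 = -(D ω ^ 2 / t ^ 2) by ring]
  rw [ex_add, ex_const hP, ex_const_mul] at hpoint
  have : ex P (fun ω => D ω ^ 2) / t ^ 2 ≤ 1 / 4 := by
    rw [div_le_iff₀ (by positivity)]
    linarith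
  linarith [show -1 / t ^ 2 * ex P (fun ω => D ω ^ 2) = -(ex P (fun ω => D ω ^ 2) / t ^ 2) by ring]

lemma edgeCount_top (q : ℕ) :
    (edgeCount (⊤ : SimpleGraph (Fin q)) : ℝ) = q * (q - 1) / 2 := by
  rw [edgeCount, SimpleGraph.card_edgeFinset_top_eq_card_choose_two, Fintype.card_fin,
    Nat.cast_choose_two]

/-- Second moment bound for the collision count of the complete graph. -/
lemma ex_collisions_top_le {n q : ℕ} (hq : 1 ≤ q) {P : Fin n → ℝ} (hP0 : ∀ i, 0 ≤ P i)
    (hP : ∑ i, P i = 1) :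
    ex P (fun ω : Fin q → Fin n =>
        (collisions ⊤ ω - edgeCount (⊤ : SimpleGraph (Fin q)) * ∑ i, P i ^ 2) ^ 2)
      ≤ edgeCount (⊤ : SimpleGraph (Fin q))
        * (2 * q * (∑ i, P i ^ 3 - (∑ i, P i ^ 2) ^ 2) + ∑ i, P i ^ 2) := by
  have hq' : (1 : ℝ) ≤ q := by exact_mod_cast hq
  have hgap := sq_sum_sq_le_sum_cube hP0 hP
  have hdeg : ∑ v, ((⊤ : SimpleGraph (Fin q)).degree v : ℝ) ^ 2
      = edgeCount (⊤ : SimpleGraph (Fin q)) * (2 * (q - 1)) := by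
    simp only [SimpleGraph.complete_graph_degree, Fintype.card_fin, sum_const, card_univ,
      nsmul_eq_mul, edgeCount_top, Nat.cast_sub hq, Nat.cast_one]
    ring
  rw [ex_collisions_sub_mean_sq _ hP, hdeg, mul_assoc, ← mul_add]
  refine mul_le_mul_of_nonneg_left ?_ (Nat.cast_nonneg _)
  nlinarith [sq_nonneg (∑ i, P i ^ 2)]

lemma sum_sq_sub_inv {n : ℕ} (hn : n ≠ 0) {P : Fin n → ℝ} (hP : ∑ i, P i = 1) :
    ∑ i, (P i - 1 / (n : ℝ)) ^ 2 = ∑ i, P i ^ 2 - 1 / n := by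
  have hn' : (n : ℝ) ≠ 0 := by exact_mod_cast hn
  have hterm : ∀ i, (P i - 1 / (n : ℝ)) ^ 2 = P i ^ 2 - P i * (2 / n) + (1 / n) ^ 2 := by
    intro i
    ring
  simp only [hterm, sum_add_distrib, sum_sub_distrib, ← sum_mul, hP, sum_const, card_univ,
    Fintype.card_fin, nsmul_eq_mul]
  field_simp
  ring

lemma sum_cube_sub_sq_sum_sq_le {n : ℕ} {P : Fin n → ℝ} (hP : ∑ i, P i = 1) {b : ℝ}
    (hb : 0 ≤ b) (hb2 : b ^ 2 = ∑ i, (P i - 1 / (n : ℝ)) ^ 2) :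
    ∑ i, P i ^ 3 - (∑ i, P i ^ 2) ^ 2 ≤ b ^ 2 / n + b ^ 3 := by
  have hcenter : ∑ i, P i * (P i - 1 / (n : ℝ)) ^ 2
      = ∑ i, P i ^ 3 - 2 / n * ∑ i, P i ^ 2 + (1 / n) ^ 2 := by
    have hterm : ∀ i, P i * (P i - 1 / (n : ℝ)) ^ 2
        = P i ^ 3 - 2 / n * P i ^ 2 + P i * (1 / n) ^ 2 := by
      intro i
      ring
    simp only [hterm, sum_add_distrib, sum_sub_distrib, ← sum_mul, ← mul_sum, hP, one_mul]
  have hmax : ∀ i, P i ≤ 1 / n + b := by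
    intro i
    have : (P i - 1 / (n : ℝ)) ^ 2 ≤ b ^ 2 := by
      rw [hb2]
      exact single_le_sum (f := fun i => (P i - 1 / (n : ℝ)) ^ 2)
        (fun j _ => sq_nonneg _) (mem_univ i)
    linarith [abs_le_of_sq_le_sq' this hb]
  have hbound : ∑ i, P i * (P i - 1 / (n : ℝ)) ^ 2 ≤ (1 / n + b) * b ^ 2 := by
    rw [hb2, mul_sum]
    exact sum_le_sum fun i _ => mul_le_mul_of_nonneg_right (hmax i) (sq_nonneg _)
  rw [hcenter] at hbound
  have hexp : (1 / (n : ℝ) + b) * b ^ 2 = b ^ 2 / n + b ^ 3 := by ring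
  have hsq : 2 / (n : ℝ) * ∑ i, P i ^ 2 - (1 / n) ^ 2 - (∑ i, P i ^ 2) ^ 2
      = -(∑ i, P i ^ 2 - 1 / n) ^ 2 := by ring
  linarith [sq_nonneg (∑ i, P i ^ 2 - 1 / (n : ℝ))]

/-- The sample size bound makes the variance small against the squared gap. -/
lemma far_variance_bound {r q ε c : ℝ} (hr : 1 ≤ r) (hε0 : 0 < ε) (hε1 : ε ≤ 1)
    (hq : 300 * r ≤ q * ε ^ 2) (hq0 : 2 ≤ q) (hc : ε ≤ c) :
    2 * q * (c ^ 2 + c ^ 3 * r) + r ^ 2 + r ^ 2 * c ^ 2 ≤ q * (q - 1) / 2 * c ^ 4 / 16 := by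
  have hc0 : 0 < c := hε0.trans_le hc
  have hqc2 : 300 * r ≤ q * c ^ 2 := hq.trans (by gcongr)
  have hqc : 300 * r ≤ q * c :=
    hq.trans (by gcongr; exact (pow_le_of_le_one hε0.le hε1 two_ne_zero).trans hc)
  have h1 : q * c ^ 2 * 300 ≤ q * c ^ 2 * (q * c ^ 2) := by gcongr; linarith
  have h2 : q * c ^ 3 * (300 * r) ≤ q * c ^ 3 * (q * c) := by gcongr
  have h3 : (300 * r) ^ 2 ≤ (q * c ^ 2) ^ 2 := by gcongr
  have h4 : (300 * r) ^ 2 * c ^ 2 ≤ (q * c) ^ 2 * c ^ 2 := by gcongr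
  have h5 : q * 2 * c ^ 4 ≤ q * q * c ^ 4 := by gcongr
  have h6 : 0 ≤ q * q * c ^ 4 := by positivity
  nlinarith

/-- Centralized model: for `q ≥ 300√n/ε²`, the collision-based tester `(K_q, 1/2)`
(comparing all pairs among `q` i.i.d. samples) is an `(n, ε)`-uniformity tester. -/
theorem centralized_clique_tester (n : ℕ) (hn : 2 ≤ n)
    (ε : ℝ) (hε0 : 0 < ε) (hε1 : ε ≤ 1)
    (q : ℕ) (hq : 300 * Real.sqrt n / ε ^ 2 ≤ (q : ℝ)) :
    IsUniformityTester n ε (1 / 2) (⊤ : SimpleGraph (Fin q)) := by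
  have hn0 : n ≠ 0 := by omega
  have hnpos : (0 : ℝ) < n := by exact_mod_cast Nat.pos_of_ne_zero hn0
  set r := Real.sqrt n with hr
  have hr2 : r ^ 2 = n := Real.sq_sqrt hnpos.le
  have hr1 : 1 ≤ r := Real.one_le_sqrt.2 (by exact_mod_cast (by omega : 1 ≤ n))
  have hqε : 300 * r ≤ q * ε ^ 2 := (div_le_iff₀ (by positivity)).1 hq
  have hε2 : ε ^ 2 ≤ 1 := pow_le_one₀ hε0.le hε1
  have hq2 : (2 : ℝ) ≤ q := by
    have : (q : ℝ) * ε ^ 2 ≤ q * 1 := by gcongr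
    linarith
  have hq1 : 1 ≤ q := by exact_mod_cast (by linarith : (1 : ℝ) ≤ q)
  have hE := edgeCount_top q
  set N : ℝ := (edgeCount (⊤ : SimpleGraph (Fin q)) : ℝ) with hN
  have hNpos : 0 < N := by rw [hE]; nlinarith
  constructor
  · have hU : ∑ _i : Fin n, (1 : ℝ) / n = 1 := by simp [hn0]
    have hU0 : ∀ _i : Fin n, (0 : ℝ) ≤ 1 / n := fun _ => by positivity
    have hS2 : ∑ _i : Fin n, ((1 : ℝ) / n) ^ 2 = 1 / n := by
      simp
      field_simp
    have hS3 : ∑ _i : Fin n, ((1 : ℝ) / n) ^ 3 = (1 / n) ^ 2 := by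
      simp
      field_simp
    have hvar := ex_collisions_top_le hq1 hU0 hU
    rw [← hN, hS2, hS3] at hvar
    refine three_quarters_le_pr hU0 hU (t := N * ε ^ 2 / (2 * n)) (by positivity) ?_
      (hvar.trans ?_)
    · intro ω hω
      refine le_trans ?_ (le_abs_self _)
      rw [not_lt] at hω
      have : N * (1 + 1 / 2 * ε ^ 2) / n = N * (1 / n) + N * ε ^ 2 / (2 * n) := by
        field_simp
      linarith
    · have hlarge : (300 * r) ^ 2 ≤ (q * ε ^ 2) ^ 2 := by gcongr
      have hmain : 16 * n ≤ N * ε ^ 4 := by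
        have h1 : (q : ℝ) * 2 * ε ^ 4 ≤ q * q * ε ^ 4 := by gcongr
        rw [hE]
        nlinarith
      have heq : (N * ε ^ 2 / (2 * n)) ^ 2 / 4 = N / (16 * n ^ 2) * (N * ε ^ 4) := by
        field_simp
        ring
      rw [heq]
      calc N * (2 * q * ((1 / n) ^ 2 - (1 / n) ^ 2) + 1 / n) = N / (16 * n ^ 2) * (16 * n) := by
            field_simp
            ring
        _ ≤ _ := by gcongr
  · intro P hP0 hP hfar
    have hgap := sum_sq_sub_inv hn0 hP
    obtain ⟨b, hb, hb2⟩ : ∃ b : ℝ, 0 ≤ b ∧ b ^ 2 = ∑ i, (P i - 1 / (n : ℝ)) ^ 2 :=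
      ⟨_, Real.sqrt_nonneg _, Real.sq_sqrt (sum_nonneg fun i _ => sq_nonneg _)⟩
    have hCS : (∑ i, |P i - 1 / (n : ℝ)|) ^ 2 ≤ n * b ^ 2 := by
      have h := sq_sum_le_card_mul_sum_sq (s := univ) (f := fun i => |P i - 1 / (n : ℝ)|)
      simpa only [sq_abs, card_univ, Fintype.card_fin, ← hb2] using h
    have hεb : ε ≤ b * r := by
      refine (sq_le_sq₀ hε0.le (by positivity)).1 ?_
      rw [mul_pow, hr2, mul_comm]
      exact (pow_le_pow_left₀ hε0.le hfar 2).trans hCS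
    have hbpos : 0 < b := pos_of_mul_pos_left (hε0.trans_le hεb) (by positivity)
    have hS2 : ∑ i, P i ^ 2 = 1 / n + b ^ 2 := by linarith
    have hcube := sum_cube_sub_sq_sum_sq_le hP hb hb2
    have hvar := ex_collisions_top_le hq1 hP0 hP
    rw [← hN] at hvar
    refine three_quarters_le_pr hP0 hP (t := N * b ^ 2 / 2) (by positivity) ?_ (hvar.trans ?_)
    · intro ω hω
      refine le_trans ?_ (neg_le_abs _)
      rw [not_le] at hω
      rw [hS2]
      have hεn : ε ^ 2 / n ≤ b ^ 2 := by
        rw [div_le_iff₀ hnpos, ← hr2, ← mul_pow]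
        gcongr
      have hT : N * (1 + 1 / 2 * ε ^ 2) / n = N * (1 / n) + N * (ε ^ 2 / n) / 2 := by
        field_simp
      have : N * (ε ^ 2 / n) ≤ N * b ^ 2 := by gcongr
      linarith
    · have hbound := far_variance_bound hr1 hε0 hε1 hqε hq2 hεb
      rw [← hE] at hbound
      have hscale : (2 * q * (b ^ 2 / n + b ^ 3) + (1 / n + b ^ 2)) * r ^ 4
          ≤ (N * b ^ 4 / 16) * r ^ 4 := by
        have : (2 * q * (b ^ 2 / n + b ^ 3) + (1 / n + b ^ 2)) * r ^ 4
            = 2 * q * ((b * r) ^ 2 + (b * r) ^ 3 * r) + r ^ 2 + r ^ 2 * (b * r) ^ 2 := by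
          rw [← hr2]
          field_simp
          ring
        rw [this]
        refine hbound.trans (le_of_eq ?_)
        ring
      have hdiv := le_of_mul_le_mul_right hscale (by positivity)
      calc N * (2 * q * (∑ i, P i ^ 3 - (∑ i, P i ^ 2) ^ 2) + ∑ i, P i ^ 2)
          ≤ N * (2 * q * (b ^ 2 / n + b ^ 3) + (1 / n + b ^ 2)) := by
            rw [← hS2]
            gcongr
        _ ≤ N * (N * b ^ 4 / 16) := by gcongr
        _ = (N * b ^ 2 / 2) ^ 2 / 4 := by ring
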